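/- arXiv:2309.12649 — 2 statements merged into one kernel-verified Lean document; each statement's English description precedes it below -/
import Mathlib

section
/- Fix an integer N ≥ 2, t ∈ [0,1] and n ≥ 0. Then for every x ∈ [0,1], |F^t_{N,n}(x) − G_N(x)| ≤ β_N · α^t_{N,n}, where β_N = 2N − 1 − 2√(N(N−1)). -/
open MeasureTheory Set Real Filter

/-- The Rényi-type continued fraction map `R_N`. -/
noncomputable def RN (N : ℕ) (x : ℝ) : ℝ :=
  if x = 1 then 0 else (N : ℝ) / (1 - x) - ⌊(N : ℝ) / (1 - x)⌋

/-- `digit N k x` is the `(k+1)`-st digit `a_{k+1}(x)`. -/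
noncomputable def digit (N k : ℕ) (x : ℝ) : ℤ :=
  ⌊(N : ℝ) / (1 - (RN N)^[k] x)⌋

/-- The conditional probability measure `ρ^t_N`, with density
`N(N-1+t)/[N-(1-x)(1-t)]²` on `[0,1]`. -/
noncomputable def rhoT (N : ℕ) (t : ℝ) : Measure ℝ :=
  (volume.restrict (Set.Icc (0 : ℝ) 1)).withDensity fun x =>
    ENNReal.ofReal ((N : ℝ) * ((N : ℝ) - 1 + t) / ((N : ℝ) - (1 - x) * (1 - t)) ^ 2)

/-- The invariant probability measure `ρ_N`, with density
`(log(N/(N-1)))⁻¹/(x+N-1)` on `[0,1]`. -/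
noncomputable def rhoN (N : ℕ) : Measure ℝ :=
  (volume.restrict (Set.Icc (0 : ℝ) 1)).withDensity fun x =>
    ENNReal.ofReal ((Real.log ((N : ℝ) / ((N : ℝ) - 1)))⁻¹ / (x + (N : ℝ) - 1))

/-- `s^t_{N,k}(y)` built from the digits of `y`. -/
noncomputable def sVar (N : ℕ) (t y : ℝ) : ℕ → ℝ
  | 0 => t
  | k + 1 => 1 - (N : ℝ) / ((digit N k y : ℝ) + sVar N t y k)

/-- `F^t_{N,n}(x) = ρ^t_N(R_N^n < x)`. -/
noncomputable def FF (N : ℕ) (t : ℝ) (n : ℕ) (x : ℝ) : ℝ :=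
  (rhoT N t {y | (RN N)^[n] y < x}).toReal

/-- `G_N(s) = ρ_N([0,s])`. -/
noncomputable def GN (N : ℕ) (s : ℝ) : ℝ := (rhoN N (Set.Icc 0 s)).toReal

/-- `G^t_{N,n}(s)`. -/
noncomputable def Gt (N : ℕ) (t : ℝ) : ℕ → ℝ → ℝ
  | 0 => fun s => if s ≤ t then 0 else 1
  | n + 1 => fun s => (rhoT N t {y | sVar N t y (n + 1) < s}).toReal

/-- `α^t_{N,n} = sup_{s ∈ [0,1]} |G^t_{N,n}(s) − G_N(s)|`. -/
noncomputable def alpha (N : ℕ) (t : ℝ) (n : ℕ) : ℝ :=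
  ⨆ s : Set.Icc (0 : ℝ) 1, |Gt N t n s - GN N s|

/-!
The conditional law of `R_N^n` under `ρ^t_N`, given the first `n` digits, is `ρ^{s_n}_N`: the
inverse branch `w ↦ 1 - N / (a + w)` of `R_N` maps `ρ^{t'}_N`, where `t' = 1 - N / (a + t)`, onto
`ρ^t_N` conditioned on the first digit being `a`. Hence `F^t_{N,n}(x)` is the mean of
`h_x(s) = ρ^s_N([0, x])` over the law of `s_n`. On the other hand `ρ_N` is the mixture of the
`ρ^s_N` over `s ∼ ρ_N`, so `G_N(x)` is the mean of the same function over `ρ_N`. As `h_x` is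
decreasing, the layer-cake formula bounds the difference of the two means by `h_x(0) - h_x(1)` times
the uniform distance between the two distribution functions, and by AM-GM `h_x(0) - h_x(1) ≤ β_N`.
-/

/-! ### Means of a decreasing function -/

section Comparison

lemma exists_forall_le_iff_of_antitoneOn {α β : Type*} [LinearOrder α] [TopologicalSpace α]
    [OrderTopology α] [CompactIccSpace α] [Preorder β] [TopologicalSpace β] [ClosedIicTopology β]
    {f : α → β} {a b : α} {c : β} (hab : a ≤ b) (hf : AntitoneOn f (Icc a b))
    (hfc : ContinuousOn f (Icc a b)) (hc : f b ≤ c) :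
    ∃ s ∈ Icc a b, ∀ y ∈ Icc a b, f y ≤ c ↔ s ≤ y := by
  have hcompact : IsCompact (Icc a b ∩ f ⁻¹' Iic c) := isCompact_Icc.of_isClosed_subset
    (hfc.preimage_isClosed_of_isClosed isClosed_Icc isClosed_Iic) inter_subset_left
  obtain ⟨s, ⟨hs, hsc⟩, hmin⟩ := hcompact.exists_isLeast ⟨b, right_mem_Icc.2 hab, hc⟩
  exact ⟨s, hs, fun y hy ↦ ⟨fun h ↦ hmin ⟨hy, h⟩, fun h ↦ (hf hs hy h).trans hsc⟩⟩

variable {f : ℝ → ℝ} {a b : ℝ} {μ ν : Measure ℝ} [IsProbabilityMeasure μ]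
  [IsProbabilityMeasure ν]

lemma integral_eq_sub_integral_Ioc_of_antitoneOn (hf : AntitoneOn f (Icc a b))
    (hfc : ContinuousOn f (Icc a b)) (hμ : ∀ᵐ y ∂μ, y ∈ Icc a b) :
    ∫ y, f y ∂μ = f a - ∫ u in Ioc 0 (f a - f b), μ.real {y | u ≤ f a - f y} := by
  obtain ⟨_, h⟩ := hμ.exists
  have hab : a ≤ b := h.1.trans h.2
  have hint : Integrable f μ := by
    rw [← Measure.restrict_eq_self_of_ae_mem hμ]
    exact hfc.integrableOn_Icc
  have hlayer := ((integrable_const (f a)).sub hint).integral_eq_integral_Ioc_meas_le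
    (M := f a - f b)
    (hμ.mono fun y hy ↦ sub_nonneg.2 (hf (left_mem_Icc.2 hab) hy hy.1))
    (hμ.mono fun y hy ↦ sub_le_sub_left (hf hy (right_mem_Icc.2 hab) hy.2) _)
  simp only [Pi.sub_apply] at hlayer
  rw [← hlayer, integral_sub (integrable_const _) hint, integral_const, probReal_univ, one_smul,
    sub_sub_cancel]

lemma integrableOn_measureReal_le {Ω : Type*} [MeasurableSpace Ω] (μ : Measure Ω)
    [IsFiniteMeasure μ] (g : Ω → ℝ) (a b : ℝ) :
    IntegrableOn (fun u ↦ μ.real {y | u ≤ g y}) (Ioc a b) := by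
  have hanti : Antitone fun u ↦ μ.real {y | u ≤ g y} :=
    fun _ _ huv ↦ measureReal_mono fun _ hy ↦ huv.trans hy
  have hIcc : IntegrableOn (fun u ↦ μ.real {y | u ≤ g y}) (Icc a b) :=
    (hanti.antitoneOn _).integrableOn_isCompact isCompact_Icc
  exact hIcc.mono_set Ioc_subset_Icc_self

lemma measureReal_setOf_eq_one_sub_Iio {S : Set ℝ} {s : ℝ} (hμ : ∀ᵐ y ∂μ, y ∈ S)
    {p : ℝ → Prop} (hp : ∀ y ∈ S, p y ↔ s ≤ y) : μ.real {y | p y} = 1 - μ.real (Iio s) := by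
  rw [← probReal_compl_eq_one_sub measurableSet_Iio, compl_Iio]
  exact measureReal_congr (hμ.mono fun y hy ↦ propext (hp y hy))

theorem abs_integral_sub_integral_le_of_antitoneOn {C : ℝ} (hf : AntitoneOn f (Icc a b))
    (hfc : ContinuousOn f (Icc a b)) (hμ : ∀ᵐ y ∂μ, y ∈ Icc a b) (hν : ∀ᵐ y ∂ν, y ∈ Icc a b)
    (hC : ∀ s ∈ Icc a b, |μ.real (Iio s) - ν.real (Iio s)| ≤ C) :
    |∫ y, f y ∂μ - ∫ y, f y ∂ν| ≤ (f a - f b) * C := by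
  obtain ⟨_, h⟩ := hμ.exists
  have hab : a ≤ b := h.1.trans h.2
  have hfab : f b ≤ f a := hf (left_mem_Icc.2 hab) (right_mem_Icc.2 hab) hab
  have hlevel : ∀ u ∈ Ioc 0 (f a - f b),
      ‖ν.real {y | u ≤ f a - f y} - μ.real {y | u ≤ f a - f y}‖ ≤ C := by
    intro u hu
    obtain ⟨s, hs, hiff⟩ :=
      exists_forall_le_iff_of_antitoneOn hab hf hfc (c := f a - u) (by linarith [hu.2])
    have hp : ∀ y ∈ Icc a b, u ≤ f a - f y ↔ s ≤ y := fun y hy ↦ le_sub_comm.trans (hiff y hy)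
    rw [measureReal_setOf_eq_one_sub_Iio hμ hp, measureReal_setOf_eq_one_sub_Iio hν hp,
      sub_sub_sub_cancel_left]
    exact hC s hs
  rw [integral_eq_sub_integral_Ioc_of_antitoneOn hf hfc hμ,
    integral_eq_sub_integral_Ioc_of_antitoneOn hf hfc hν, sub_sub_sub_cancel_left,
    ← integral_sub (integrableOn_measureReal_le ν _ _ _) (integrableOn_measureReal_le μ _ _ _),
    mul_comm]
  simpa [hfab] using norm_setIntegral_le_of_norm_le_const (μ := volume) measure_Ioc_lt_top hlevel

end Comparison

/-! ### Measures on an interval with an explicit primitive -/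

section Density

variable {f F : ℝ → ℝ} {a b x : ℝ}

lemma setLIntegral_Icc_ofReal_eq_sub_of_hasDerivAt (hab : a ≤ b)
    (hF : ∀ u ∈ Icc a b, HasDerivAt F (f u) u) (hf : ∀ u ∈ Icc a b, 0 ≤ f u) :
    ∫⁻ u in Icc a b, ENNReal.ofReal (f u) = ENNReal.ofReal (F b - F a) := by
  have hint : IntegrableOn f (Ioc a b) := intervalIntegral.integrableOn_deriv_of_nonneg
    (fun u hu ↦ (hF u hu).continuousAt.continuousWithinAt)
    (fun u hu ↦ hF u (Ioo_subset_Icc_self hu)) fun u hu ↦ hf u (Ioo_subset_Icc_self hu)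
  rw [← uIcc_of_le hab] at hF
  rw [← intervalIntegral.integral_eq_sub_of_hasDerivAt hF
      ((intervalIntegrable_iff_integrableOn_Ioc_of_le hab).2 hint),
    intervalIntegral.integral_of_le hab, Measure.restrict_congr_set Ioc_ae_eq_Icc.symm,
    ofReal_integral_eq_lintegral_ofReal hint
      ((ae_restrict_mem measurableSet_Ioc).mono fun u hu ↦ hf u (Ioc_subset_Icc_self hu))]

lemma withDensity_restrict_Icc_apply_Icc_eq_Iio (g : ℝ → ENNReal) (a b x : ℝ) :
    (volume.restrict (Icc a b)).withDensity g (Icc a x) =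
      (volume.restrict (Icc a b)).withDensity g (Iio x) := by
  apply measure_congr
  apply (withDensity_absolutelyContinuous _ g).ae_le
  filter_upwards [ae_restrict_mem measurableSet_Icc,
    ae_restrict_of_ae (Measure.ae_ne volume x)] with y hy hne
  exact propext ⟨fun h ↦ h.2.lt_of_ne hne, fun h ↦ ⟨hy.1, le_of_lt h⟩⟩

lemma withDensity_restrict_Icc_apply_Iio (hF : ∀ u ∈ Icc a b, HasDerivAt F (f u) u)
    (hf : ∀ u ∈ Icc a b, 0 ≤ f u) (hx : x ∈ Icc a b) :
    (volume.restrict (Icc a b)).withDensity (fun u ↦ ENNReal.ofReal (f u)) (Iio x) =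
      ENNReal.ofReal (F x - F a) := by
  have hsub : Icc a x ⊆ Icc a b := Icc_subset_Icc_right hx.2
  rw [← withDensity_restrict_Icc_apply_Icc_eq_Iio, withDensity_apply _ measurableSet_Icc,
    Measure.restrict_restrict measurableSet_Icc, inter_eq_left.2 hsub,
    setLIntegral_Icc_ofReal_eq_sub_of_hasDerivAt hx.1 (fun u hu ↦ hF u (hsub hu))
      fun u hu ↦ hf u (hsub hu)]

lemma isProbabilityMeasure_withDensity_restrict_Icc (hab : a ≤ b)
    (hF : ∀ u ∈ Icc a b, HasDerivAt F (f u) u) (hf : ∀ u ∈ Icc a b, 0 ≤ f u)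
    (hone : F b - F a = 1) :
    IsProbabilityMeasure
      ((volume.restrict (Icc a b)).withDensity fun u ↦ ENNReal.ofReal (f u)) := by
  constructor
  rw [withDensity_apply _ MeasurableSet.univ, Measure.restrict_univ,
    setLIntegral_Icc_ofReal_eq_sub_of_hasDerivAt hab hF hf, hone, ENNReal.ofReal_one]

end Density

/-! ### The measures `ρ^t_N` -/

/-- The density of `ρ^t_N` on `[0, 1]`, real-valued. -/
noncomputable def rhoTDensity (N : ℕ) (t x : ℝ) : ℝ :=
  (N : ℝ) * ((N : ℝ) - 1 + t) / ((N : ℝ) - (1 - x) * (1 - t)) ^ 2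

/-- The distribution function `x ↦ ρ^t_N([0, x])`, also used as a function of `t`. -/
noncomputable def rhoTCdf (N : ℕ) (t x : ℝ) : ℝ :=
  (N : ℝ) * x / ((N : ℝ) - (1 - x) * (1 - t))

section RhoT

variable {N : ℕ} {t x : ℝ}

lemma natCast_sub_one_sub_mul_one_sub_pos (hN : 2 ≤ N) (ht : t ∈ Icc (0 : ℝ) 1)
    (hx : x ∈ Icc (0 : ℝ) 1) : 0 < (N : ℝ) - (1 - x) * (1 - t) := by
  have hN' : (2 : ℝ) ≤ N := mod_cast hN
  have hle : (1 - x) * (1 - t) ≤ 1 :=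
    mul_le_one₀ (by linarith [hx.1]) (by linarith [ht.2]) (by linarith [ht.1])
  linarith

lemma rhoTDensity_nonneg (hN : 1 ≤ N) (ht : 0 ≤ t) : 0 ≤ rhoTDensity N t x := by
  have hN' : (1 : ℝ) ≤ N := mod_cast hN
  have : 0 ≤ (N : ℝ) - 1 + t := by linarith
  unfold rhoTDensity
  positivity

lemma hasDerivAt_rhoTCdf (h : (N : ℝ) - (1 - x) * (1 - t) ≠ 0) :
    HasDerivAt (rhoTCdf N t) (rhoTDensity N t x) x := by
  have hnum : HasDerivAt (fun x : ℝ ↦ (N : ℝ) * x) ((N : ℝ) * 1) x :=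
    (hasDerivAt_id x).const_mul _
  have hden : HasDerivAt (fun x : ℝ ↦ (N : ℝ) - (1 - x) * (1 - t)) (-(-1 * (1 - t))) x :=
    (((hasDerivAt_id x).const_sub 1).mul_const (1 - t)).const_sub (N : ℝ)
  exact (hnum.fun_div hden h).congr_deriv (by unfold rhoTDensity; ring)

lemma rhoTCdf_apply_zero : rhoTCdf N t 0 = 0 := by simp [rhoTCdf]

lemma rhoTCdf_apply_one (hN : N ≠ 0) : rhoTCdf N t 1 = 1 := by simp [rhoTCdf, hN]

lemma rhoT_apply_Iio (hN : 2 ≤ N) (ht : t ∈ Icc (0 : ℝ) 1) (hx : x ∈ Icc (0 : ℝ) 1) :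
    rhoT N t (Iio x) = ENNReal.ofReal (rhoTCdf N t x) := by
  rw [← sub_zero (rhoTCdf N t x), ← rhoTCdf_apply_zero]
  exact withDensity_restrict_Icc_apply_Iio
    (fun u hu ↦ hasDerivAt_rhoTCdf (natCast_sub_one_sub_mul_one_sub_pos hN ht hu).ne')
    (fun u _ ↦ rhoTDensity_nonneg (by lia) ht.1) hx

lemma isProbabilityMeasure_rhoT (hN : 2 ≤ N) (ht : t ∈ Icc (0 : ℝ) 1) :
    IsProbabilityMeasure (rhoT N t) :=
  isProbabilityMeasure_withDensity_restrict_Icc zero_le_one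
    (fun u hu ↦ hasDerivAt_rhoTCdf (natCast_sub_one_sub_mul_one_sub_pos hN ht hu).ne')
    (fun u _ ↦ rhoTDensity_nonneg (by lia) ht.1)
    (by rw [rhoTCdf_apply_one (by lia), rhoTCdf_apply_zero, sub_zero])

lemma ae_mem_Ico_rhoT (N : ℕ) (t : ℝ) : ∀ᵐ y ∂rhoT N t, y ∈ Ico (0 : ℝ) 1 := by
  apply (withDensity_absolutelyContinuous _ _).ae_le
  rw [← Measure.restrict_congr_set Ico_ae_eq_Icc]
  exact ae_restrict_mem measurableSet_Ico

lemma setLIntegral_rhoT {S : Set ℝ} (hS : MeasurableSet S) (hsub : S ⊆ Icc 0 1)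
    (g : ℝ → ENNReal) :
    ∫⁻ y in S, g y ∂rhoT N t = ∫⁻ y in S, ENNReal.ofReal (rhoTDensity N t y) * g y := by
  have hmeas : Measurable fun y ↦ ENNReal.ofReal (rhoTDensity N t y) := by
    unfold rhoTDensity; fun_prop
  refine (setLIntegral_withDensity_eq_setLIntegral_mul_non_measurable _ hmeas g hS
    (ae_of_all _ fun _ ↦ ENNReal.ofReal_lt_top)).trans ?_
  rw [Measure.restrict_restrict hS, inter_eq_left.2 hsub]
  rfl

lemma rhoTCdf_nonneg (hN : 2 ≤ N) (ht : t ∈ Icc (0 : ℝ) 1) (hx : x ∈ Icc (0 : ℝ) 1) :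
    0 ≤ rhoTCdf N t x :=
  div_nonneg (mul_nonneg N.cast_nonneg hx.1) (natCast_sub_one_sub_mul_one_sub_pos hN ht hx).le

lemma measurable_rhoTCdf_left : Measurable fun s ↦ rhoTCdf N s x := by
  unfold rhoTCdf; fun_prop

lemma continuousOn_rhoTCdf_left (hN : 2 ≤ N) (hx : x ∈ Icc (0 : ℝ) 1) :
    ContinuousOn (fun s ↦ rhoTCdf N s x) (Icc 0 1) :=
  ContinuousOn.div (by fun_prop) (by fun_prop)
    fun _ hs ↦ (natCast_sub_one_sub_mul_one_sub_pos hN hs hx).ne'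

lemma antitoneOn_rhoTCdf_left (hN : 2 ≤ N) (hx : x ∈ Icc (0 : ℝ) 1) :
    AntitoneOn (fun s ↦ rhoTCdf N s x) (Icc 0 1) := by
  intro s hs u _ hsu
  have hx0 : 0 ≤ x := hx.1
  have hx1 : 0 ≤ 1 - x := sub_nonneg.2 hx.2
  have hpos := natCast_sub_one_sub_mul_one_sub_pos hN hs hx
  simp only [rhoTCdf]
  gcongr

lemma rhoTCdf_zero_sub_rhoTCdf_one_le (hN : 2 ≤ N) (hx : 0 ≤ x) :
    rhoTCdf N 0 x - rhoTCdf N 1 x ≤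
      2 * (N : ℝ) - 1 - 2 * Real.sqrt ((N : ℝ) * ((N : ℝ) - 1)) := by
  have hN' : (2 : ℝ) ≤ N := mod_cast hN
  set u := (N : ℝ) - 1 + x with hu
  have hu0 : 0 < u := by linarith
  have hdiff : rhoTCdf N 0 x - rhoTCdf N 1 x = 2 * N - 1 - (u + N * (N - 1) / u) := by
    have hzero : rhoTCdf N 0 x = N * x / u := by rw [rhoTCdf]; ring
    have hone : rhoTCdf N 1 x = x := by
      rw [rhoTCdf, sub_self, mul_zero, sub_zero, mul_div_cancel_left₀ x (by positivity)]
    have hx' : x = u - (N - 1) := by rw [hu]; ring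
    rw [hzero, hone, hx']
    field_simp
    ring
  have hamgm : 2 * √((N : ℝ) * (N - 1)) ≤ u + N * (N - 1) / u := by
    have hsq : √((N : ℝ) * (N - 1)) ^ 2 = N * (N - 1) := Real.sq_sqrt (by nlinarith)
    rw [← sub_nonneg]
    calc 0 ≤ (u - √((N : ℝ) * (N - 1))) ^ 2 / u := by positivity
      _ = u + N * (N - 1) / u - 2 * √((N : ℝ) * (N - 1)) := by
        rw [sub_sq, hsq]
        field_simp
        ring
  linarith

end RhoT

/-! ### Inverse branches and first-digit cylinders -/

/-- The inverse branch of `R_N` on the set of points with first digit `a`. It is also the map by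
which the digit `a` updates the parameter `s^t_{N,k}`. -/
noncomputable def branch (N : ℕ) (a : ℤ) (w : ℝ) : ℝ := 1 - (N : ℝ) / ((a : ℝ) + w)

/-- The points of `[0, 1)` with first digit `a`; empty unless `N ≤ a`. -/
def firstDigitCylinder (N : ℕ) (a : ℤ) : Set ℝ := {y ∈ Ico (0 : ℝ) 1 | digit N 0 y = a}

/-- The `ρ^t_N`-measure of the cylinder of first digit `a`, for `N ≤ a`. -/
noncomputable def cylinderMass (N : ℕ) (a : ℤ) (t : ℝ) : ℝ :=
  ((N : ℝ) - 1 + t) / (((a : ℝ) + t) * ((a : ℝ) + t - 1))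

section Branch

variable {N : ℕ} {a : ℤ} {t w y : ℝ}

-- At `y = 1` both sides vanish because `N / 0 = 0`.
lemma RN_eq_fract (N : ℕ) (y : ℝ) : RN N y = Int.fract ((N : ℝ) / (1 - y)) := by
  by_cases hy : y = 1
  · simp [RN, hy]
  · rw [RN, if_neg hy, Int.fract]

lemma measurable_RN (N : ℕ) : Measurable (RN N) := by
  simp only [funext (RN_eq_fract N)]
  fun_prop

lemma measurable_digit (N k : ℕ) : Measurable (digit N k) := by
  have := (measurable_RN N).iterate k
  unfold digit
  fun_prop

lemma mapsTo_RN (N : ℕ) : MapsTo (RN N) (Ico 0 1) (Ico 0 1) := fun _ _ ↦ by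
  rw [RN_eq_fract]
  exact ⟨Int.fract_nonneg _, Int.fract_lt_one _⟩

lemma le_digit_zero (hy : y ∈ Ico (0 : ℝ) 1) : (N : ℤ) ≤ digit N 0 y := by
  have hy1 : 0 < 1 - y := sub_pos.2 hy.2
  refine Int.le_floor.2 ?_
  push_cast
  exact le_div_self N.cast_nonneg hy1 (by simpa using hy.1)

lemma branch_mem_Icc (ha : N ≤ a) (hw : 0 ≤ w) : branch N a w ∈ Icc (0 : ℝ) 1 := by
  have ha' : (N : ℝ) ≤ a := mod_cast ha
  have ha0 : 0 ≤ (a : ℝ) + w := by linarith [(N.cast_nonneg : (0 : ℝ) ≤ N)]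
  exact ⟨sub_nonneg.2 (div_le_one_of_le₀ (by linarith) ha0), sub_le_self _ (by positivity)⟩

lemma div_one_sub_branch (hN : N ≠ 0) : (N : ℝ) / (1 - branch N a w) = a + w := by
  rw [branch, sub_sub_cancel, div_div_cancel₀ (Nat.cast_ne_zero.2 hN)]

lemma branch_mem_firstDigitCylinder (hN : N ≠ 0) (ha : N ≤ a) (hw : w ∈ Ico (0 : ℝ) 1) :
    branch N a w ∈ firstDigitCylinder N a := by
  have hN' : (0 : ℝ) < N := by positivity
  have ha' : (N : ℝ) ≤ a := mod_cast ha
  have hpos : 0 < (a : ℝ) + w := by linarith [hw.1]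
  refine ⟨⟨(branch_mem_Icc ha hw.1).1, sub_lt_self _ (by positivity)⟩, ?_⟩
  rw [digit, Function.iterate_zero_apply, div_one_sub_branch hN, Int.floor_intCast_add,
    Int.floor_eq_zero_iff.2 hw, add_zero]

lemma RN_branch (hN : N ≠ 0) (hw : w ∈ Ico (0 : ℝ) 1) : RN N (branch N a w) = w := by
  rw [RN_eq_fract, div_one_sub_branch hN, Int.fract_intCast_add, Int.fract_eq_self.2 hw]

lemma branch_digit_RN (hN : N ≠ 0) : branch N (digit N 0 y) (RN N y) = y := by
  rw [RN_eq_fract, branch, digit, Function.iterate_zero_apply, Int.floor_add_fract,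
    div_div_cancel₀ (Nat.cast_ne_zero.2 hN), sub_sub_cancel]

lemma bijOn_branch (hN : N ≠ 0) (ha : N ≤ a) :
    BijOn (branch N a) (Ico 0 1) (firstDigitCylinder N a) := by
  refine InvOn.bijOn (f' := RN N) ⟨fun _ hw ↦ RN_branch hN hw, ?_⟩
    (fun _ hw ↦ branch_mem_firstDigitCylinder hN ha hw) fun _ hy ↦ mapsTo_RN N hy.1
  rintro y ⟨_, rfl⟩
  exact branch_digit_RN hN

lemma hasDerivAt_branch (h : (a : ℝ) + w ≠ 0) :
    HasDerivAt (branch N a) ((N : ℝ) / ((a : ℝ) + w) ^ 2) w := by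
  have hden : HasDerivAt (fun w : ℝ ↦ (a : ℝ) + w) 1 w := (hasDerivAt_id w).const_add _
  exact (((hasDerivAt_const w (N : ℝ)).fun_div hden h).const_sub 1).congr_deriv (by ring)

lemma measurableSet_firstDigitCylinder (N : ℕ) (a : ℤ) :
    MeasurableSet (firstDigitCylinder N a) :=
  measurableSet_Ico.inter (measurable_digit N 0 (measurableSet_singleton a))

lemma lintegral_rhoT_eq_tsum_firstDigitCylinder (N : ℕ) (t : ℝ) (g : ℝ → ENNReal) :
    ∫⁻ y, g y ∂rhoT N t = ∑' a, ∫⁻ y in firstDigitCylinder N a, g y ∂rhoT N t := by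
  have hdisj : Pairwise (Function.onFun Disjoint (firstDigitCylinder N)) := fun a b hab ↦
    Set.disjoint_left.2 fun y hya hyb ↦ hab (hya.2.symm.trans hyb.2)
  have hunion : ⋃ a, firstDigitCylinder N a = Ico 0 1 := by
    ext y
    simp [firstDigitCylinder]
  rw [← lintegral_iUnion (measurableSet_firstDigitCylinder N) hdisj, hunion,
    Measure.restrict_eq_self_of_ae_mem (ae_mem_Ico_rhoT N t)]

lemma cylinderMass_nonneg (hN : 1 ≤ N) (ha : N ≤ a) (ht : 0 ≤ t) : 0 ≤ cylinderMass N a t := by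
  have hN' : (1 : ℝ) ≤ N := mod_cast hN
  have ha' : (N : ℝ) ≤ a := mod_cast ha
  exact div_nonneg (by linarith) (mul_nonneg (by linarith) (by linarith))

lemma deriv_branch_mul_rhoTDensity (hN : 2 ≤ N) (ha : N ≤ a) (ht : 0 ≤ t) (hw : 0 ≤ w) :
    (N : ℝ) / ((a : ℝ) + w) ^ 2 * rhoTDensity N t (branch N a w) =
      cylinderMass N a t * rhoTDensity N (branch N a t) w := by
  have hN' : (2 : ℝ) ≤ N := mod_cast hN
  have ha' : (N : ℝ) ≤ a := mod_cast ha
  have haw : (a : ℝ) + w ≠ 0 := by linarith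
  have hat : (a : ℝ) + t ≠ 0 := by linarith
  have hat1 : (a : ℝ) + t - 1 ≠ 0 := by linarith
  have hatw : (a : ℝ) + t - 1 + w ≠ 0 := by linarith
  have hden : (N : ℝ) - (1 - branch N a w) * (1 - t) = N * (a + t - 1 + w) / (a + w) := by
    unfold branch; field_simp; ring
  have hden' : (N : ℝ) - (1 - w) * (1 - branch N a t) = N * (a + t - 1 + w) / (a + t) := by
    unfold branch; field_simp; ring
  have hnum' : (N : ℝ) - 1 + branch N a t = N * (a + t - 1) / (a + t) := by
    unfold branch; field_simp; ring
  rw [rhoTDensity, rhoTDensity, cylinderMass, hden, hden', hnum']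
  field_simp

theorem setLIntegral_firstDigitCylinder_comp_RN (hN : 2 ≤ N) (ha : N ≤ a) (ht : 0 ≤ t)
    (g : ℝ → ENNReal) :
    ∫⁻ y in firstDigitCylinder N a, g (RN N y) ∂rhoT N t =
      ENNReal.ofReal (cylinderMass N a t) * ∫⁻ w, g w ∂rhoT N (branch N a t) := by
  have hN0 : N ≠ 0 := by lia
  have ha' : (0 : ℝ) < a := by exact_mod_cast (show (0 : ℤ) < a by lia)
  have hbij := bijOn_branch hN0 ha
  have hderiv : ∀ w ∈ Ico (0 : ℝ) 1,
      HasDerivWithinAt (branch N a) ((N : ℝ) / ((a : ℝ) + w) ^ 2) (Ico 0 1) w := fun w hw ↦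
    (hasDerivAt_branch (by linarith [hw.1])).hasDerivWithinAt
  rw [setLIntegral_rhoT (measurableSet_firstDigitCylinder N a) fun y hy ↦ Ico_subset_Icc_self hy.1,
    ← hbij.image_eq, lintegral_image_eq_lintegral_abs_deriv_mul measurableSet_Ico hderiv hbij.injOn,
    ← Measure.restrict_eq_self_of_ae_mem (ae_mem_Ico_rhoT N (branch N a t)),
    setLIntegral_rhoT measurableSet_Ico Ico_subset_Icc_self,
    ← lintegral_const_mul' _ _ ENNReal.ofReal_ne_top]
  refine setLIntegral_congr_fun measurableSet_Ico fun w hw ↦ ?_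
  have hjac : 0 ≤ (N : ℝ) / ((a : ℝ) + w) ^ 2 := by positivity
  simp only [RN_branch hN0 hw, abs_of_nonneg hjac]
  rw [← mul_assoc, ← mul_assoc, ← ENNReal.ofReal_mul hjac,
    ← ENNReal.ofReal_mul (cylinderMass_nonneg (by lia) ha ht),
    deriv_branch_mul_rhoTDensity hN ha ht hw.1]

end Branch

/-! ### The Brodén–Borel–Lévy formula -/

/-- The law of `s^t_{N,n}` under `ρ^t_N`, whose distribution function is `G^t_{N,n}`. -/
noncomputable def sVarLaw (N : ℕ) (t : ℝ) (n : ℕ) : Measure ℝ :=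
  (rhoT N t).map fun y ↦ sVar N t y n

section SVar

variable {N : ℕ} {t x : ℝ}

lemma sVar_succ_eq_sVar_RN (N : ℕ) (t y : ℝ) (n : ℕ) :
    sVar N t y (n + 1) = sVar N (branch N (digit N 0 y) t) (RN N y) n := by
  induction n with
  | zero => rfl
  | succ n ih => rw [sVar, ih]; rfl

lemma measurable_sVar (N : ℕ) (t : ℝ) (n : ℕ) : Measurable fun y ↦ sVar N t y n := by
  induction n with
  | zero => exact measurable_const
  | succ n ih =>
    have := measurable_digit N n
    simp only [sVar]
    fun_prop

lemma sVar_mem_Icc (ht : t ∈ Icc (0 : ℝ) 1) {y : ℝ} (hy : y ∈ Ico (0 : ℝ) 1) (n : ℕ) :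
    sVar N t y n ∈ Icc (0 : ℝ) 1 := by
  induction n with
  | zero => exact ht
  | succ n ih => exact branch_mem_Icc (le_digit_zero ((mapsTo_RN N).iterate n hy)) ih.1

theorem lintegral_comp_iterate_RN (hN : 2 ≤ N) (ht : t ∈ Icc (0 : ℝ) 1) (n : ℕ)
    (g : ℝ → ENNReal) :
    ∫⁻ y, g ((RN N)^[n] y) ∂rhoT N t = ∫⁻ y, ∫⁻ w, g w ∂rhoT N (sVar N t y n) ∂rhoT N t := by
  induction n generalizing t with
  | zero =>
    have := isProbabilityMeasure_rhoT hN ht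
    simp [sVar]
  | succ n ih =>
    simp only [lintegral_rhoT_eq_tsum_firstDigitCylinder N t, Function.iterate_succ_apply]
    refine tsum_congr fun a ↦ ?_
    rcases (firstDigitCylinder N a).eq_empty_or_nonempty with hempty | ⟨_, hmem, rfl⟩
    · simp [hempty]
    have ha := le_digit_zero (N := N) hmem
    set a := digit N 0 _
    have hstep := setLIntegral_firstDigitCylinder_comp_RN hN ha ht.1
    rw [hstep fun y ↦ g ((RN N)^[n] y), ih (branch_mem_Icc ha ht.1), ← hstep]
    refine setLIntegral_congr_fun (measurableSet_firstDigitCylinder N a) fun y hy ↦ ?_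
    simp only [sVar_succ_eq_sVar_RN, hy.2]

lemma isProbabilityMeasure_sVarLaw (hN : 2 ≤ N) (ht : t ∈ Icc (0 : ℝ) 1) (n : ℕ) :
    IsProbabilityMeasure (sVarLaw N t n) :=
  have := isProbabilityMeasure_rhoT hN ht
  Measure.isProbabilityMeasure_map (measurable_sVar N t n).aemeasurable

lemma ae_mem_Icc_sVarLaw (ht : t ∈ Icc (0 : ℝ) 1) (n : ℕ) :
    ∀ᵐ s ∂sVarLaw N t n, s ∈ Icc (0 : ℝ) 1 :=
  (ae_map_iff (measurable_sVar N t n).aemeasurable measurableSet_Icc).2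
    ((ae_mem_Ico_rhoT N t).mono fun _ hy ↦ sVar_mem_Icc ht hy n)

lemma Gt_eq_measureReal_sVarLaw (hN : 2 ≤ N) (ht : t ∈ Icc (0 : ℝ) 1) (n : ℕ) (s : ℝ) :
    Gt N t n s = (sVarLaw N t n).real (Iio s) := by
  rw [sVarLaw, map_measureReal_apply (measurable_sVar N t n) measurableSet_Iio]
  cases n with
  | zero =>
    have := isProbabilityMeasure_rhoT hN ht
    by_cases hs : s ≤ t
    · simp [Gt, sVar, hs]
    · simp [Gt, sVar, hs, not_le.1 hs]
  | succ n => rfl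

theorem FF_eq_integral_sVarLaw (hN : 2 ≤ N) (ht : t ∈ Icc (0 : ℝ) 1) (n : ℕ)
    (hx : x ∈ Icc (0 : ℝ) 1) :
    FF N t n x = ∫ s, rhoTCdf N s x ∂sVarLaw N t n := by
  have hmeas : MeasurableSet {y | (RN N)^[n] y < x} :=
    measurableSet_lt ((measurable_RN N).iterate n) measurable_const
  have hmix : rhoT N t {y | (RN N)^[n] y < x} =
      ∫⁻ s, ENNReal.ofReal (rhoTCdf N s x) ∂sVarLaw N t n :=
    calc rhoT N t {y | (RN N)^[n] y < x}
        = ∫⁻ y, (Iio x).indicator 1 ((RN N)^[n] y) ∂rhoT N t :=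
          (lintegral_indicator_one hmeas).symm
      _ = ∫⁻ y, rhoT N (sVar N t y n) (Iio x) ∂rhoT N t := by
          simp only [lintegral_comp_iterate_RN hN ht, lintegral_indicator_one measurableSet_Iio]
      _ = ∫⁻ y, ENNReal.ofReal (rhoTCdf N (sVar N t y n) x) ∂rhoT N t :=
          lintegral_congr_ae ((ae_mem_Ico_rhoT N t).mono fun y hy ↦
            rhoT_apply_Iio hN (sVar_mem_Icc ht hy n) hx)
      _ = ∫⁻ s, ENNReal.ofReal (rhoTCdf N s x) ∂sVarLaw N t n :=
          (lintegral_map measurable_rhoTCdf_left.ennreal_ofReal (measurable_sVar N t n)).symm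
  rw [FF, hmix, integral_eq_lintegral_of_nonneg_ae
    ((ae_mem_Icc_sVarLaw ht n).mono fun s hs ↦ rhoTCdf_nonneg hN hs hx)
    measurable_rhoTCdf_left.aestronglyMeasurable]

end SVar

/-! ### The invariant measure `ρ_N` -/

/-- The density of `ρ_N` on `[0, 1]`, real-valued. -/
noncomputable def rhoNDensity (N : ℕ) (x : ℝ) : ℝ :=
  (Real.log ((N : ℝ) / ((N : ℝ) - 1)))⁻¹ / (x + (N : ℝ) - 1)

/-- The distribution function `x ↦ ρ_N([0, x])` in closed form. -/
noncomputable def rhoNCdf (N : ℕ) (x : ℝ) : ℝ :=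
  (Real.log ((N : ℝ) / ((N : ℝ) - 1)))⁻¹ *
    (Real.log (x + (N : ℝ) - 1) - Real.log ((N : ℝ) - 1))

section RhoN

variable {N : ℕ} {t x : ℝ}

lemma log_div_sub_one_pos (hN : 2 ≤ N) : 0 < Real.log ((N : ℝ) / ((N : ℝ) - 1)) := by
  have hN' : (2 : ℝ) ≤ N := mod_cast hN
  exact Real.log_pos ((one_lt_div (by linarith)).2 (by linarith))

lemma add_natCast_sub_one_pos (hN : 2 ≤ N) (hx : 0 ≤ x) : 0 < x + (N : ℝ) - 1 := by
  have hN' : (2 : ℝ) ≤ N := mod_cast hN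
  linarith

lemma rhoNDensity_nonneg (hN : 2 ≤ N) (hx : 0 ≤ x) : 0 ≤ rhoNDensity N x :=
  div_nonneg (inv_nonneg.2 (log_div_sub_one_pos hN).le) (add_natCast_sub_one_pos hN hx).le

lemma hasDerivAt_rhoNCdf (h : x + (N : ℝ) - 1 ≠ 0) :
    HasDerivAt (rhoNCdf N) (rhoNDensity N x) x := by
  have hlin : HasDerivAt (fun u : ℝ ↦ u + N - 1) 1 x :=
    ((hasDerivAt_id x).add_const _).sub_const _
  exact (((hlin.log h).sub_const _).const_mul _).congr_deriv (by unfold rhoNDensity; ring)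

lemma rhoNCdf_zero (N : ℕ) : rhoNCdf N 0 = 0 := by simp [rhoNCdf]

lemma rhoNCdf_one (hN : 2 ≤ N) : rhoNCdf N 1 = 1 := by
  have hN' : (2 : ℝ) ≤ N := mod_cast hN
  rw [rhoNCdf, add_sub_cancel_left, ← Real.log_div (by linarith) (by linarith),
    inv_mul_cancel₀ (log_div_sub_one_pos hN).ne']

lemma rhoN_apply_Iio (hN : 2 ≤ N) (hx : x ∈ Icc (0 : ℝ) 1) :
    rhoN N (Iio x) = ENNReal.ofReal (rhoNCdf N x) := by
  rw [← sub_zero (rhoNCdf N x), ← rhoNCdf_zero N]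
  exact withDensity_restrict_Icc_apply_Iio
    (fun u hu ↦ hasDerivAt_rhoNCdf (add_natCast_sub_one_pos hN hu.1).ne')
    (fun u hu ↦ rhoNDensity_nonneg hN hu.1) hx

lemma isProbabilityMeasure_rhoN (hN : 2 ≤ N) : IsProbabilityMeasure (rhoN N) :=
  isProbabilityMeasure_withDensity_restrict_Icc zero_le_one
    (fun u hu ↦ hasDerivAt_rhoNCdf (add_natCast_sub_one_pos hN hu.1).ne')
    (fun u hu ↦ rhoNDensity_nonneg hN hu.1)
    (by rw [rhoNCdf_one hN, rhoNCdf_zero, sub_zero])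

lemma ae_mem_Icc_rhoN (N : ℕ) : ∀ᵐ y ∂rhoN N, y ∈ Icc (0 : ℝ) 1 :=
  (withDensity_absolutelyContinuous _ _).ae_le (ae_restrict_mem measurableSet_Icc)

lemma GN_eq_measureReal_rhoN (N : ℕ) (s : ℝ) : GN N s = (rhoN N).real (Iio s) :=
  congrArg ENNReal.toReal (withDensity_restrict_Icc_apply_Icc_eq_Iio _ 0 1 s)

lemma lintegral_rhoN (g : ℝ → ENNReal) :
    ∫⁻ s, g s ∂rhoN N = ∫⁻ s in Icc 0 1, ENNReal.ofReal (rhoNDensity N s) * g s := by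
  have hmeas : Measurable fun s ↦ ENNReal.ofReal (rhoNDensity N s) := by
    unfold rhoNDensity; fun_prop
  exact lintegral_withDensity_eq_lintegral_mul_non_measurable _ hmeas
    (ae_of_all _ fun _ ↦ ENNReal.ofReal_lt_top) g

lemma hasDerivAt_rhoNCdf_sub_log (ht : t + (N : ℝ) - 1 ≠ 0)
    (htx : (N : ℝ) - (1 - x) * (1 - t) ≠ 0) :
    HasDerivAt (fun s ↦ rhoNCdf N s -
        (Real.log ((N : ℝ) / ((N : ℝ) - 1)))⁻¹ * Real.log ((N : ℝ) - (1 - x) * (1 - s)))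
      (rhoNDensity N t * rhoTCdf N t x) t := by
  have hden : HasDerivAt (fun s : ℝ ↦ (N : ℝ) - (1 - x) * (1 - s)) (-((1 - x) * -1)) t :=
    (((hasDerivAt_id t).const_sub 1).const_mul (1 - x)).const_sub (N : ℝ)
  refine ((hasDerivAt_rhoNCdf ht).fun_sub ((hden.log htx).const_mul _)).congr_deriv ?_
  unfold rhoNDensity rhoTCdf
  field_simp
  ring

theorem lintegral_rhoTCdf_rhoN (hN : 2 ≤ N) (hx : x ∈ Icc (0 : ℝ) 1) :
    ∫⁻ s, ENNReal.ofReal (rhoTCdf N s x) ∂rhoN N = ENNReal.ofReal (rhoNCdf N x) := by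
  have hdensity : ∀ s ∈ Icc (0 : ℝ) 1, 0 ≤ rhoNDensity N s := fun s hs ↦
    rhoNDensity_nonneg hN hs.1
  calc ∫⁻ s, ENNReal.ofReal (rhoTCdf N s x) ∂rhoN N
      = ∫⁻ s in Icc 0 1, ENNReal.ofReal (rhoNDensity N s * rhoTCdf N s x) := by
        rw [lintegral_rhoN]
        exact setLIntegral_congr_fun measurableSet_Icc fun s hs ↦
          (ENNReal.ofReal_mul (hdensity s hs)).symm
    _ = ENNReal.ofReal (rhoNCdf N x) := by
        rw [setLIntegral_Icc_ofReal_eq_sub_of_hasDerivAt zero_le_one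
          (fun s hs ↦ hasDerivAt_rhoNCdf_sub_log (add_natCast_sub_one_pos hN hs.1).ne'
            (natCast_sub_one_sub_mul_one_sub_pos hN hs hx).ne')
          fun s hs ↦ mul_nonneg (hdensity s hs) (rhoTCdf_nonneg hN hs hx)]
        have hone : (N : ℝ) - (1 - x) * (1 - 1) = 1 + N - 1 := by ring
        have hzero : (N : ℝ) - (1 - x) * (1 - 0) = x + N - 1 := by ring
        rw [hone, hzero, rhoNCdf_zero, rhoNCdf, rhoNCdf]
        congr 1
        ring

theorem GN_eq_integral_rhoN (hN : 2 ≤ N) (hx : x ∈ Icc (0 : ℝ) 1) :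
    GN N x = ∫ s, rhoTCdf N s x ∂rhoN N := by
  rw [GN_eq_measureReal_rhoN, measureReal_def, rhoN_apply_Iio hN hx,
    ← lintegral_rhoTCdf_rhoN hN hx, integral_eq_lintegral_of_nonneg_ae
      ((ae_mem_Icc_rhoN N).mono fun s hs ↦ rhoTCdf_nonneg hN hs hx)
      measurable_rhoTCdf_left.aestronglyMeasurable]

lemma abs_Gt_sub_GN_le_alpha (hN : 2 ≤ N) (ht : t ∈ Icc (0 : ℝ) 1) (n : ℕ)
    (hx : x ∈ Icc (0 : ℝ) 1) : |Gt N t n x - GN N x| ≤ alpha N t n := by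
  have := isProbabilityMeasure_sVarLaw hN ht n
  have := isProbabilityMeasure_rhoN hN
  refine le_ciSup (f := fun s : Icc (0 : ℝ) 1 ↦ |Gt N t n s - GN N s|) ⟨1, ?_⟩ ⟨x, hx⟩
  rintro _ ⟨s, rfl⟩
  simp only [Gt_eq_measureReal_sVarLaw hN ht, GN_eq_measureReal_rhoN]
  exact abs_sub_le_of_nonneg_of_le
    measureReal_nonneg measureReal_le_one measureReal_nonneg measureReal_le_one

end RhoN

theorem stmt7 (N : ℕ) (hN : 2 ≤ N) (t : ℝ) (ht : t ∈ Set.Icc (0 : ℝ) 1)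
    (n : ℕ) (x : ℝ) (hx : x ∈ Set.Icc (0 : ℝ) 1) :
    |FF N t n x - GN N x|
      ≤ (2 * (N : ℝ) - 1 - 2 * Real.sqrt ((N : ℝ) * ((N : ℝ) - 1))) * alpha N t n := by
  have := isProbabilityMeasure_sVarLaw hN ht n
  have := isProbabilityMeasure_rhoN hN
  have halpha : 0 ≤ alpha N t n := (abs_nonneg _).trans (abs_Gt_sub_GN_le_alpha hN ht n hx)
  calc |FF N t n x - GN N x|
      = |∫ s, rhoTCdf N s x ∂sVarLaw N t n - ∫ s, rhoTCdf N s x ∂rhoN N| := by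
        rw [FF_eq_integral_sVarLaw hN ht n hx, GN_eq_integral_rhoN hN hx]
    _ ≤ (rhoTCdf N 0 x - rhoTCdf N 1 x) * alpha N t n :=
        abs_integral_sub_integral_le_of_antitoneOn (antitoneOn_rhoTCdf_left hN hx)
          (continuousOn_rhoTCdf_left hN hx) (ae_mem_Icc_sVarLaw ht n) (ae_mem_Icc_rhoN N)
          fun s hs ↦ by
            rw [← Gt_eq_measureReal_sVarLaw hN ht, ← GN_eq_measureReal_rhoN]
            exact abs_Gt_sub_GN_le_alpha hN ht n hs
    _ ≤ _ := mul_le_mul_of_nonneg_right (rhoTCdf_zero_sub_rhoTCdf_one_le hN hx.1) halpha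
end

section
/- Fix an integer N ≥ 2. Then ε_{N,1} = N log(N/(N−1)) − 1, where ε_{N,1} = sup{ |ρ^t_N(B)/ρ_N(B) − 1| : t ∈ [0,1], B ⊆ [0,1] Borel with ρ_N(B) > 0 }. -/
open MeasureTheory Set Real Filter

/-!
Let `a > 1` be real, in place of `N`. The density of `ρ^t` relative to `ρ` is
`L · a(a-u)(a-v)/(a-uv)²` with `u = 1 - x`, `v = 1 - t` and `L = log (a/(a-1))`, so
`ρ^t(B)/ρ(B)` is its `ρ`-average over `B`. For `u, v ∈ [0,1]` the rational factor lies in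
`[a-1, a]`, and `log (1+y) ≥ 2y/(y+2)` gives `1 - (a-1)L ≤ aL - 1`; hence every average is within
`aL - 1` of `1`. At `t = 1` the density is `L(x+a-1)`, which tends to `aL` as `x → 1`, and the
bound is approached along `B = [x, 1]`.
-/

section RelativeDensity

variable {α : Type*} [MeasurableSpace α] {μ : Measure α}

lemma withDensity_ofReal_real_div_real_eq_setAverage {f : α → ℝ} {s : Set α}
    (hs : MeasurableSet s) (hf : AEStronglyMeasurable f (μ.restrict s))
    (hf₀ : ∀ x ∈ s, 0 ≤ f x) :
    (μ.withDensity fun x => ENNReal.ofReal (f x)).real s / μ.real s = ⨍ x in s, f x ∂μ := by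
  rw [setAverage_eq, smul_eq_mul, inv_mul_eq_div, measureReal_def, withDensity_apply _ hs,
    integral_eq_lintegral_of_nonneg_ae (ae_restrict_of_forall_mem hs hf₀) hf]

lemma withDensity_ofReal_real_div_real_mem {f : α → ℝ} {s : Set α} {S : Set ℝ}
    (hs : MeasurableSet s) (hs₀ : μ s ≠ 0) (hs_top : μ s ≠ ⊤) (hf : IntegrableOn f s μ)
    (hf₀ : ∀ x ∈ s, 0 ≤ f x) (hconv : Convex ℝ S) (hclosed : IsClosed S)
    (hfS : ∀ x ∈ s, f x ∈ S) :
    (μ.withDensity fun x => ENNReal.ofReal (f x)).real s / μ.real s ∈ S := by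
  rw [withDensity_ofReal_real_div_real_eq_setAverage hs hf.aestronglyMeasurable hf₀]
  exact hconv.set_average_mem hclosed hs₀ hs_top (ae_restrict_of_forall_mem hs hfS) hf

end RelativeDensity

section Inequalities

variable {a u v : ℝ}

lemma sub_mul_sub_le_sq_sub_mul (ha : 1 ≤ a) (hu : u ∈ Icc (0 : ℝ) 1) (hv : v ∈ Icc (0 : ℝ) 1) :
    (a - u) * (a - v) ≤ (a - u * v) ^ 2 := by
  obtain ⟨hu₀, hu₁⟩ := hu
  obtain ⟨hv₀, hv₁⟩ := hv
  have hdiff : (a - u * v) ^ 2 - (a - u) * (a - v) =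
      u * (1 - v) * (a - v) + v * (1 - u) * (a - u * v) := by ring
  have : 0 ≤ 1 - u := sub_nonneg.2 hu₁
  have : 0 ≤ 1 - v := sub_nonneg.2 hv₁
  have : 0 ≤ a - v := sub_nonneg.2 (hv₁.trans ha)
  have : 0 ≤ a - u * v := sub_nonneg.2 ((mul_le_one₀ hu₁ hv₀ hv₁).trans ha)
  rw [← sub_nonneg, hdiff]
  positivity

lemma sub_one_mul_sq_sub_mul_le (ha : 1 ≤ a) (hu : u ∈ Icc (0 : ℝ) 1)
    (hv : v ∈ Icc (0 : ℝ) 1) :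
    (a - 1) * (a - u * v) ^ 2 ≤ a * ((a - u) * (a - v)) := by
  obtain ⟨hu₀, hu₁⟩ := hu
  obtain ⟨hv₀, hv₁⟩ := hv
  have hdiff : a * ((a - u) * (a - v)) - (a - 1) * (a - u * v) ^ 2 =
      (1 - u) * (a ^ 2 * (1 - v)) + u * ((a - 1) * (a - v) * v)
        + (a - 1) * v ^ 2 * (u * (1 - u)) := by ring
  have : 0 ≤ 1 - u := sub_nonneg.2 hu₁
  have : 0 ≤ 1 - v := sub_nonneg.2 hv₁
  have : 0 ≤ a - 1 := sub_nonneg.2 ha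
  have : 0 ≤ a - v := sub_nonneg.2 (hv₁.trans ha)
  rw [← sub_nonneg, hdiff]
  positivity

lemma log_div_sub_one_pos_s14 (ha : 1 < a) : 0 < log (a / (a - 1)) :=
  log_pos <| (one_lt_div (sub_pos.2 ha)).2 (sub_one_lt a)

lemma two_le_two_mul_sub_one_mul_log (ha : 1 < a) :
    2 ≤ (2 * a - 1) * log (a / (a - 1)) := by
  have ha₁ : 0 < a - 1 := sub_pos.2 ha
  have hlog := le_log_one_add_of_nonneg (one_div_pos.2 ha₁).le
  have harg : 1 + 1 / (a - 1) = a / (a - 1) := by field_simp; ring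
  have hbound : 2 * (1 / (a - 1)) / (1 / (a - 1) + 2) = 2 / (2 * a - 1) := by
    have : 2 * a - 1 ≠ 0 := by linarith
    have hden : 1 / (a - 1) + 2 = (2 * a - 1) / (a - 1) := by field_simp; ring
    rw [hden]
    field_simp
  rw [harg, hbound, div_le_iff₀ (by linarith)] at hlog
  linarith

end Inequalities

/-- The invariant measure `ρ_a` for a real parameter `a > 1` in place of the integer `N`. -/
noncomputable def invariantMeasure (a : ℝ) : Measure ℝ :=
  (volume.restrict (Icc 0 1)).withDensity fun x =>
    ENNReal.ofReal ((log (a / (a - 1)))⁻¹ / (x + a - 1))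

/-- The conditional measure `ρ^t_a` for a real parameter `a > 1` in place of the integer `N`. -/
noncomputable def conditionalMeasure (a t : ℝ) : Measure ℝ :=
  (volume.restrict (Icc 0 1)).withDensity fun x =>
    ENNReal.ofReal (a * (a - 1 + t) / (a - (1 - x) * (1 - t)) ^ 2)

/-- The density of `conditionalMeasure a t` relative to `invariantMeasure a`, as the quotient of
their Lebesgue densities. -/
noncomputable def relativeDensity (a t x : ℝ) : ℝ :=
  log (a / (a - 1)) * (a * (a - 1 + t) * (x + a - 1) / (a - (1 - x) * (1 - t)) ^ 2)

section Measures

variable {a t x : ℝ} {B : Set ℝ}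

lemma sub_one_sub_mul_one_sub_pos (ha : 1 < a) (ht : t ∈ Icc (0 : ℝ) 1)
    (hx : x ∈ Icc (0 : ℝ) 1) : 0 < a - (1 - x) * (1 - t) := by
  have : (1 - x) * (1 - t) ≤ 1 :=
    mul_le_one₀ (by linarith [hx.1]) (by linarith [ht.2]) (by linarith [ht.1])
  linarith

lemma relativeDensity_one (ha : a ≠ 0) :
    relativeDensity a 1 x = log (a / (a - 1)) * (x + a - 1) := by
  simp only [relativeDensity, sub_add_cancel, sub_self, mul_zero, sub_zero]
  field_simp

lemma relativeDensity_mem_Icc (ha : 1 < a) (ht : t ∈ Icc (0 : ℝ) 1) (hx : x ∈ Icc (0 : ℝ) 1) :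
    relativeDensity a t x ∈ Icc ((a - 1) * log (a / (a - 1))) (a * log (a / (a - 1))) := by
  have hL := log_div_sub_one_pos_s14 ha
  have hD := sub_one_sub_mul_one_sub_pos ha ht hx
  have hu : 1 - x ∈ Icc (0 : ℝ) 1 := Icc.mem_iff_one_sub_mem.1 hx
  have hv : 1 - t ∈ Icc (0 : ℝ) 1 := Icc.mem_iff_one_sub_mem.1 ht
  have hnum : a * (a - 1 + t) * (x + a - 1) = a * ((a - (1 - x)) * (a - (1 - t))) := by ring
  rw [relativeDensity, hnum, mul_comm (a - 1), mul_comm a (log _)]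
  constructor
  · gcongr
    exact (le_div_iff₀ (by positivity)).2 (sub_one_mul_sq_sub_mul_le ha.le hu hv)
  · gcongr
    refine (div_le_iff₀ (by positivity)).2 ?_
    gcongr
    exact sub_mul_sub_le_sq_sub_mul ha.le hu hv

lemma relativeDensity_nonneg (ha : 1 < a) (ht : t ∈ Icc (0 : ℝ) 1) (hx : x ∈ Icc (0 : ℝ) 1) :
    0 ≤ relativeDensity a t x :=
  (mul_nonneg (sub_pos.2 ha).le (log_div_sub_one_pos_s14 ha).le).trans
    (relativeDensity_mem_Icc ha ht hx).1

lemma relativeDensity_mem_closedBall (ha : 1 < a) (ht : t ∈ Icc (0 : ℝ) 1)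
    (hx : x ∈ Icc (0 : ℝ) 1) :
    relativeDensity a t x ∈ Metric.closedBall 1 (a * log (a / (a - 1)) - 1) := by
  obtain ⟨hlower, hupper⟩ := relativeDensity_mem_Icc ha ht hx
  have hlog := two_le_two_mul_sub_one_mul_log ha
  rw [Real.closedBall_eq_Icc]
  constructor <;> linarith

lemma continuousOn_relativeDensity (ha : 1 < a) (ht : t ∈ Icc (0 : ℝ) 1) :
    ContinuousOn (relativeDensity a t) (Icc 0 1) := by
  unfold relativeDensity
  refine continuousOn_const.mul (ContinuousOn.div (by fun_prop) (by fun_prop) fun x hx => ?_)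
  exact pow_ne_zero 2 (sub_one_sub_mul_one_sub_pos ha ht hx).ne'

lemma isFiniteMeasure_invariantMeasure (ha : 1 < a) : IsFiniteMeasure (invariantMeasure a) := by
  have hcont : ContinuousOn (fun x : ℝ => (log (a / (a - 1)))⁻¹ / (x + a - 1)) (Icc 0 1) :=
    ContinuousOn.div (by fun_prop) (by fun_prop) fun x hx => by linarith [hx.1]
  exact isFiniteMeasure_withDensity_ofReal hcont.integrableOn_Icc.hasFiniteIntegral

lemma restrict_Icc_absolutelyContinuous_invariantMeasure (ha : 1 < a) :
    volume.restrict (Icc 0 1) ≪ invariantMeasure a := by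
  refine withDensity_absolutelyContinuous' (by fun_prop) ?_
  refine ae_restrict_of_forall_mem measurableSet_Icc fun x hx => ?_
  have hden : 0 < x + a - 1 := by linarith [hx.1]
  have hL := log_div_sub_one_pos_s14 ha
  exact (ENNReal.ofReal_pos.2 (by positivity)).ne'

lemma invariantMeasure_Icc_ne_zero (ha : 1 < a) (hx : x ∈ Ico (0 : ℝ) 1) :
    invariantMeasure a (Icc x 1) ≠ 0 := by
  refine mt (fun h => restrict_Icc_absolutelyContinuous_invariantMeasure ha h) ?_
  rw [Measure.restrict_eq_self _ (Icc_subset_Icc_left hx.1), Real.volume_Icc]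
  exact (ENNReal.ofReal_pos.2 (sub_pos.2 hx.2)).ne'

lemma conditionalMeasure_eq_withDensity (ha : 1 < a) :
    conditionalMeasure a t =
      (invariantMeasure a).withDensity fun x => ENNReal.ofReal (relativeDensity a t x) := by
  have hL := log_div_sub_one_pos_s14 ha
  unfold invariantMeasure conditionalMeasure
  rw [← withDensity_mul _ (by fun_prop) (by unfold relativeDensity; fun_prop)]
  refine withDensity_congr_ae (ae_restrict_of_forall_mem measurableSet_Icc fun x hx => ?_)
  have hden : 0 < x + a - 1 := by linarith [hx.1]
  rw [Pi.mul_apply, ← ENNReal.ofReal_mul (by positivity), relativeDensity]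
  field_simp

lemma conditionalMeasure_real_div_mem (ha : 1 < a) (ht : t ∈ Icc (0 : ℝ) 1)
    (hB : MeasurableSet B) (hBI : B ⊆ Icc 0 1) (hB₀ : invariantMeasure a B ≠ 0) {S : Set ℝ}
    (hconv : Convex ℝ S) (hclosed : IsClosed S) (hS : ∀ x ∈ B, relativeDensity a t x ∈ S) :
    (conditionalMeasure a t).real B / (invariantMeasure a).real B ∈ S := by
  have := isFiniteMeasure_invariantMeasure ha
  rw [conditionalMeasure_eq_withDensity ha]
  exact withDensity_ofReal_real_div_real_mem hB hB₀ (measure_ne_top _ _)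
    ((continuousOn_relativeDensity ha ht).integrableOn_Icc.mono_set hBI)
    (fun x hx => relativeDensity_nonneg ha ht (hBI hx)) hconv hclosed hS

lemma abs_conditionalMeasure_real_div_sub_one_le (ha : 1 < a) (ht : t ∈ Icc (0 : ℝ) 1)
    (hB : MeasurableSet B) (hBI : B ⊆ Icc 0 1) (hB₀ : invariantMeasure a B ≠ 0) :
    |(conditionalMeasure a t).real B / (invariantMeasure a).real B - 1| ≤
      a * log (a / (a - 1)) - 1 :=
  conditionalMeasure_real_div_mem ha ht hB hBI hB₀ (convex_closedBall _ _)
    Metric.isClosed_closedBall fun _ hx => relativeDensity_mem_closedBall ha ht (hBI hx)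

lemma le_conditionalMeasure_one_real_Icc_div (ha : 1 < a) (hx : x ∈ Ico (0 : ℝ) 1) :
    log (a / (a - 1)) * (x + a - 1) ≤
      (conditionalMeasure a 1).real (Icc x 1) / (invariantMeasure a).real (Icc x 1) := by
  refine conditionalMeasure_real_div_mem (S := Ici _) ha (by simp) measurableSet_Icc
    (Icc_subset_Icc_left hx.1) (invariantMeasure_Icc_ne_zero ha hx) (convex_Ici _) isClosed_Ici
    fun y hy => ?_
  have hL := log_div_sub_one_pos_s14 ha
  rw [mem_Ici, relativeDensity_one (by linarith)]
  gcongr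
  exact hy.1

end Measures

theorem stmt14_general (a : ℝ) (ha : 1 < a) :
    IsLUB {r : ℝ | ∃ t ∈ Icc (0 : ℝ) 1, ∃ B : Set ℝ, MeasurableSet B ∧
        B ⊆ Icc (0 : ℝ) 1 ∧ 0 < (invariantMeasure a B).toReal ∧
        r = |(conditionalMeasure a t B).toReal / (invariantMeasure a B).toReal - 1|}
      (a * log (a / (a - 1)) - 1) := by
  constructor
  · rintro r ⟨t, ht, B, hB, hBI, hpos, rfl⟩
    exact abs_conditionalMeasure_real_div_sub_one_le ha ht hB hBI
      (ENNReal.toReal_pos_iff.1 hpos).1.ne'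
  · intro c hc
    have := isFiniteMeasure_invariantMeasure ha
    have hbound : ∀ x ∈ Ico (0 : ℝ) 1, log (a / (a - 1)) * (x + a - 1) - 1 ≤ c := fun x hx =>
      (sub_le_sub_right (le_conditionalMeasure_one_real_Icc_div ha hx) 1).trans <|
        (le_abs_self _).trans <| hc ⟨1, by simp, Icc x 1, measurableSet_Icc,
          Icc_subset_Icc_left hx.1, ENNReal.toReal_pos (invariantMeasure_Icc_ne_zero ha hx)
            (measure_ne_top _ _), rfl⟩
    have hlim : log (a / (a - 1)) * (1 + a - 1) - 1 ≤ c :=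
      le_on_closure hbound (by fun_prop) continuousOn_const
        (by rw [closure_Ico zero_ne_one]; exact right_mem_Icc.2 zero_le_one)
    linarith

theorem stmt14 (N : ℕ) (hN : 2 ≤ N) :
    sSup {r : ℝ | ∃ t ∈ Set.Icc (0 : ℝ) 1, ∃ B : Set ℝ, MeasurableSet B ∧
        B ⊆ Set.Icc (0 : ℝ) 1 ∧ 0 < (rhoN N B).toReal ∧
        r = |(rhoT N t B).toReal / (rhoN N B).toReal - 1|}
      = (N : ℝ) * Real.log ((N : ℝ) / ((N : ℝ) - 1)) - 1 := by
  have hlub := stmt14_general N (by exact_mod_cast hN)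
  exact hlub.csSup_eq hlub.nonempty
end
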